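/- For every level t there exist n ≥ 1 and levels u₁, …, uₙ, each generated by the max-free grammar u ::= 0 | s(u) | x | imax(u, u), such that for every valuation σ, ⟦t⟧σ = max(⟦u₁⟧σ, …, ⟦uₙ⟧σ). -/

import Mathlib

/-- The impredicative maximum on natural numbers. -/
def imaxN : ℕ → ℕ → ℕ
  | _, 0 => 0
  | i, (j+1) => max i (j+1)

/-- Levels: t ::= 0 | s(t) | x | max(t,t) | imax(t,t). -/
inductive Lvl where
  | zero : Lvl
  | succ : Lvl → Lvl
  | var : ℕ → Lvl
  | lmax : Lvl → Lvl → Lvl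
  | limax : Lvl → Lvl → Lvl

/-- Value of a level under a valuation. -/
def evalL (σ : ℕ → ℕ) : Lvl → ℕ
  | .zero => 0
  | .succ t => evalL σ t + 1
  | .var x => σ x
  | .lmax u v => max (evalL σ u) (evalL σ v)
  | .limax u v => imaxN (evalL σ u) (evalL σ v)

/-- Maximum of a list of naturals, 0 for the empty list. -/
def listMax (l : List ℕ) : ℕ := l.foldr max 0

/-- The max-free grammar u ::= 0 | s(u) | x | imax(u,u). -/
inductive MaxFree : Lvl → Prop where
  | zero : MaxFree .zero
  | succ {t : Lvl} : MaxFree t → MaxFree (.succ t)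
  | var (x : ℕ) : MaxFree (.var x)
  | imax {u v : Lvl} : MaxFree u → MaxFree v → MaxFree (.limax u v)

/-!
The operations `s`, `max` and `imax` are monotone in each argument separately, and a monotone map
between linear orders commutes with maxima of nonempty finite families. Hence every occurrence of
`max` in a level can be pulled outwards to the root.
-/

theorem imaxN_left_monotone (j : ℕ) : Monotone (imaxN · j) := by
  intro i i' hi
  cases j with
  | zero => exact le_rfl
  | succ j => exact max_le_max_right (j + 1) hi

theorem imaxN_right_monotone (i : ℕ) : Monotone (imaxN i) := by
  intro j k hjk
  match j, k, hjk with
  | 0, _, _ => exact Nat.zero_le _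
  | _ + 1, _ + 1, hjk => exact max_le_max_left i hjk

theorem listMax_cons (a : ℕ) (l : List ℕ) : listMax (a :: l) = max a (listMax l) := rfl

theorem listMax_singleton (a : ℕ) : listMax [a] = a := max_eq_left (Nat.zero_le a)

theorem listMax_append (l l' : List ℕ) :
    listMax (l ++ l') = max (listMax l) (listMax l') := by
  induction l with
  | nil => exact (max_eq_right (Nat.zero_le _)).symm
  | cons a l ih => rw [List.cons_append, listMax_cons, listMax_cons, ih, max_assoc]

theorem listMax_flatMap {α : Type*} (l : List α) (f : α → List ℕ) :
    listMax (l.flatMap f) = listMax (l.map fun a => listMax (f a)) := by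
  induction l with
  | nil => rfl
  | cons a l ih => rw [List.flatMap_cons, listMax_append, ih, List.map_cons, listMax_cons]

theorem listMax_map_of_monotone {f : ℕ → ℕ} (hf : Monotone f) {l : List ℕ} (hl : l ≠ []) :
    listMax (l.map f) = f (listMax l) := by
  induction l, hl using List.recNeNil with
  | singleton a => rw [List.map_singleton, listMax_singleton, listMax_singleton]
  | cons a l _ ih => rw [List.map_cons, listMax_cons, listMax_cons, ih, hf.map_max]

theorem listMax_flatMap_map_of_monotone {f : ℕ → ℕ → ℕ} (hleft : ∀ b, Monotone (f · b))
    (hright : ∀ a, Monotone (f a)) {l l' : List ℕ} (hl : l ≠ []) (hl' : l' ≠ []) :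
    listMax (l.flatMap fun a => l'.map (f a)) = f (listMax l) (listMax l') :=
  calc listMax (l.flatMap fun a => l'.map (f a))
    _ = listMax (l.map fun a => listMax (l'.map (f a))) := listMax_flatMap _ _
    _ = listMax (l.map (f · (listMax l'))) := by
      simp only [listMax_map_of_monotone (hright _) hl']
    _ = f (listMax l) (listMax l') := listMax_map_of_monotone (hleft _) hl

namespace Lvl

/-- The max-free levels whose pointwise maximum is the given level, obtained by distributing `succ`
and `limax` over `lmax`. They form a list, possibly with repetitions. -/
def maxFreeParts : Lvl → List Lvl
  | zero => [zero]
  | succ t => t.maxFreeParts.map succ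
  | var x => [var x]
  | lmax u v => u.maxFreeParts ++ v.maxFreeParts
  | limax u v => u.maxFreeParts.flatMap fun a => v.maxFreeParts.map (limax a)

theorem maxFreeParts_ne_nil (t : Lvl) : t.maxFreeParts ≠ [] := by
  induction t with
  | zero | var => exact List.cons_ne_nil _ _
  | succ t ih => exact mt List.map_eq_nil_iff.mp ih
  | lmax u v ihu _ => exact List.append_ne_nil_of_left_ne_nil ihu _
  | limax u v ihu ihv =>
    obtain ⟨a, ha⟩ := List.exists_mem_of_ne_nil _ ihu
    obtain ⟨b, hb⟩ := List.exists_mem_of_ne_nil _ ihv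
    exact List.ne_nil_of_mem (List.mem_flatMap.mpr ⟨a, ha, List.mem_map_of_mem hb⟩)

theorem maxFree_of_mem_maxFreeParts {t w : Lvl} (hw : w ∈ t.maxFreeParts) : MaxFree w := by
  induction t generalizing w with
  | zero => exact List.mem_singleton.mp hw ▸ .zero
  | var x => exact List.mem_singleton.mp hw ▸ .var x
  | succ t ih =>
    obtain ⟨a, ha, rfl⟩ := List.mem_map.mp hw
    exact .succ (ih ha)
  | lmax u v ihu ihv => exact (List.mem_append.mp hw).elim ihu ihv
  | limax u v ihu ihv =>
    obtain ⟨a, ha, hw⟩ := List.mem_flatMap.mp hw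
    obtain ⟨b, hb, rfl⟩ := List.mem_map.mp hw
    exact .imax (ihu ha) (ihv hb)

theorem map_evalL_maxFreeParts_limax (σ : ℕ → ℕ) (u v : Lvl) :
    (limax u v).maxFreeParts.map (evalL σ) =
      (u.maxFreeParts.map (evalL σ)).flatMap fun i =>
        (v.maxFreeParts.map (evalL σ)).map (imaxN i) := by
  simp only [maxFreeParts, List.map_flatMap, List.flatMap_map, List.map_map, Function.comp_def,
    evalL]

theorem listMax_map_evalL_maxFreeParts (σ : ℕ → ℕ) (t : Lvl) :
    listMax (t.maxFreeParts.map (evalL σ)) = evalL σ t := by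
  have map_ne_nil (t : Lvl) : t.maxFreeParts.map (evalL σ) ≠ [] :=
    mt List.map_eq_nil_iff.mp t.maxFreeParts_ne_nil
  induction t with
  | zero | var => exact listMax_singleton _
  | succ t ih =>
    calc listMax ((succ t).maxFreeParts.map (evalL σ))
      _ = listMax ((t.maxFreeParts.map (evalL σ)).map (· + 1)) := by
        simp only [maxFreeParts, List.map_map, Function.comp_def, evalL]
      _ = listMax (t.maxFreeParts.map (evalL σ)) + 1 :=
        listMax_map_of_monotone (fun _ _ h => Nat.succ_le_succ h) (map_ne_nil t)
      _ = evalL σ (succ t) := by rw [ih, evalL]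
  | lmax u v ihu ihv => rw [maxFreeParts, List.map_append, listMax_append, ihu, ihv, evalL]
  | limax u v ihu ihv =>
    rw [map_evalL_maxFreeParts_limax, listMax_flatMap_map_of_monotone imaxN_left_monotone
      imaxN_right_monotone (map_ne_nil u) (map_ne_nil v), ihu, ihv, evalL]

end Lvl

theorem level_as_max_of_maxfree (t : Lvl) :
    ∃ l : List Lvl, l ≠ [] ∧ (∀ u ∈ l, MaxFree u) ∧
      ∀ σ : ℕ → ℕ, evalL σ t = listMax (l.map (evalL σ)) :=
  ⟨t.maxFreeParts, t.maxFreeParts_ne_nil, fun _ => Lvl.maxFree_of_mem_maxFreeParts,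
    fun σ => (t.listMax_map_evalL_maxFreeParts σ).symm⟩
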